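/- Let C be a 2-reduced cocommutative dg coalgebra over ℚ and t : C ⇝ ΩC its universal twisting chain. For every left dg C-comodule N, the unit of the (t^! ⊣ t_*) adjunction, N → t_* t^! N = C ⊗^t (ΩC ⊗_t N), given by n ↦ n₍₀₎ ⊗ 1 ⊗ n₍₁₎, is a quasi-isomorphism of C-comodules, natural in N. -/

import Mathlib

open scoped TensorProduct

noncomputable section

/-- A homologically graded differential graded `ℚ`-vector space (chain complex of
`ℚ`-vector spaces presented as a graded module with a degree `-1` square-zero differential). -/
structure DGVect : Type 1 where
  carrier : Type
  [isAddCommGroup : AddCommGroup carrier]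
  [isModule : Module ℚ carrier]
  grading : ℤ → Submodule ℚ carrier
  [isDecomp : DirectSum.Decomposition grading]
  d : carrier →ₗ[ℚ] carrier
  d_mem : ∀ (n : ℤ), ∀ x ∈ grading n, d x ∈ grading (n - 1)
  d_sq : d.comp d = 0

attribute [instance] DGVect.isAddCommGroup DGVect.isModule DGVect.isDecomp

/-- The operator acting on the degree `n` graded component by `(-1)^(k*n)`. -/
def signOpOf {V : Type} [AddCommGroup V] [Module ℚ V] (g : ℤ → Submodule ℚ V)
    [DirectSum.Decomposition g] (k : ℤ) : V →ₗ[ℚ] V :=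
  (DirectSum.toModule ℚ ℤ V fun n => ((-1 : ℚ) ^ (k * n)) • (g n).subtype).comp
    (DirectSum.decomposeLinearEquiv g).toLinearMap

/-- The Koszul parity operator, acting by `(-1)^n` in degree `n`. -/
def parityOf {V : Type} [AddCommGroup V] [Module ℚ V] (g : ℤ → Submodule ℚ V)
    [DirectSum.Decomposition g] : V →ₗ[ℚ] V := signOpOf g 1

def DGVect.parity (V : DGVect) : V.carrier →ₗ[ℚ] V.carrier := parityOf V.grading

/-- A graded object is bounded below if it vanishes in all sufficiently negative degrees. -/
def DGVect.BoundedBelow (V : DGVect) : Prop := ∃ b : ℤ, ∀ n : ℤ, n < b → V.grading n = ⊥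

/-- The Koszul signed braiding `v ⊗ w ↦ (-1)^{|v||w|} w ⊗ v` of graded vector spaces. -/
def kSwapOf {V W : Type} [AddCommGroup V] [Module ℚ V] [AddCommGroup W] [Module ℚ W]
    (gV : ℤ → Submodule ℚ V) (gW : ℤ → Submodule ℚ W)
    [DirectSum.Decomposition gV] [DirectSum.Decomposition gW] :
    V ⊗[ℚ] W →ₗ[ℚ] W ⊗[ℚ] V :=
  TensorProduct.lift
    ((DirectSum.toModule ℚ ℤ (W →ₗ[ℚ] W ⊗[ℚ] V) (fun i =>
        (((DirectSum.toModule ℚ ℤ (V →ₗ[ℚ] W ⊗[ℚ] V) (fun j =>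
              ((-1 : ℚ) ^ (i * j)) • ((TensorProduct.mk ℚ W V).comp (gW j).subtype))).comp
            (DirectSum.decomposeLinearEquiv gW).toLinearMap).flip).comp
          (gV i).subtype)).comp
      (DirectSum.decomposeLinearEquiv gV).toLinearMap)

/-- The degree `n` part of the tensor product grading:
the span of the homogeneous tensors of total degree `n`. -/
def tensorGrading {V W : Type} [AddCommGroup V] [Module ℚ V] [AddCommGroup W] [Module ℚ W]
    (gV : ℤ → Submodule ℚ V) (gW : ℤ → Submodule ℚ W) (n : ℤ) : Submodule ℚ (V ⊗[ℚ] W) :=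
  ⨆ p : {p : ℤ × ℤ // p.1 + p.2 = n},
    LinearMap.range (TensorProduct.map (gV p.1.1).subtype (gW p.1.2).subtype)

/-- `f` is a quasi-isomorphism from the complex `(V, dV)` to the complex `(W, dW)`:
it induces a bijection on homology (`ker d / im d`). -/
def IsQuasiIso {V W : Type} [AddCommGroup V] [Module ℚ V] [AddCommGroup W] [Module ℚ W]
    (dV : V →ₗ[ℚ] V) (dW : W →ₗ[ℚ] W) (f : V →ₗ[ℚ] W) : Prop :=
  (∀ x : V, dV x = 0 → (∃ y, f x = dW y) → ∃ z, x = dV z) ∧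
  (∀ w : W, dW w = 0 → ∃ x, dV x = 0 ∧ ∃ y, w - f x = dW y)

/-- A differential graded algebra over `ℚ`. -/
structure DGAlgebra extends DGVect where
  mul : carrier →ₗ[ℚ] carrier →ₗ[ℚ] carrier
  one : carrier
  one_mem : one ∈ grading 0
  mul_mem : ∀ (i j : ℤ) (x y : carrier), x ∈ grading i → y ∈ grading j →
    mul x y ∈ grading (i + j)
  mul_assoc' : ∀ x y z : carrier, mul (mul x y) z = mul x (mul y z)
  one_mul' : ∀ x : carrier, mul one x = x
  mul_one' : ∀ x : carrier, mul x one = x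
  leibniz : ∀ (i : ℤ) (x y : carrier), x ∈ grading i →
    d (mul x y) = mul (d x) y + ((-1 : ℚ) ^ i) • mul x (d y)

/-- The multiplication of a dg algebra as a map out of the tensor product. -/
def DGAlgebra.mulMap (A : DGAlgebra) : A.carrier ⊗[ℚ] A.carrier →ₗ[ℚ] A.carrier :=
  TensorProduct.lift A.mul

/-- A dg algebra is connective if it is concentrated in non-negative degrees. -/
def DGAlgebra.Connective (A : DGAlgebra) : Prop := ∀ n : ℤ, n < 0 → A.grading n = ⊥

/-- A (coassociative counital) differential graded coalgebra over `ℚ`,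
non-negatively graded. -/
structure DGCoalgebra extends DGVect where
  comul : carrier →ₗ[ℚ] carrier ⊗[ℚ] carrier
  counit : carrier →ₗ[ℚ] ℚ
  nonneg : ∀ n : ℤ, n < 0 → grading n = ⊥
  comul_mem : ∀ (n : ℤ), ∀ x ∈ grading n, comul x ∈ tensorGrading grading grading n
  counit_zero : ∀ (n : ℤ), n ≠ 0 → ∀ x ∈ grading n, counit x = 0
  coassoc : (TensorProduct.assoc ℚ carrier carrier carrier).toLinearMap.comp
      ((TensorProduct.map comul LinearMap.id).comp comul)
      = (TensorProduct.map LinearMap.id comul).comp comul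
  counit_comul_left : (TensorProduct.lid ℚ carrier).toLinearMap.comp
      ((TensorProduct.map counit LinearMap.id).comp comul) = LinearMap.id
  counit_comul_right : (TensorProduct.rid ℚ carrier).toLinearMap.comp
      ((TensorProduct.map LinearMap.id counit).comp comul) = LinearMap.id
  comul_chain : comul.comp d
      = (TensorProduct.map d LinearMap.id + TensorProduct.map (parityOf grading) d).comp comul
  counit_chain : counit.comp d = 0

/-- Cocommutativity: the comultiplication is invariant under the Koszul signed twist. -/
def DGCoalgebra.Cocomm (C : DGCoalgebra) : Prop :=
  (kSwapOf C.grading C.grading).comp C.comul = C.comul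

/-- A coaugmented dg coalgebra: a dg coalgebra with a coaugmentation `η : ℚ → C`,
recorded by the grouplike element `one = η 1` in degree `0`. -/
structure CoaugDGCoalgebra extends DGCoalgebra where
  one : carrier
  one_mem : one ∈ grading 0
  counit_one : counit one = 1
  comul_one : comul one = one ⊗ₜ[ℚ] one

/-- A coaugmented dg coalgebra is 2-reduced if `C₀ = ℚ` (spanned by the coaugmentation)
and `C₁ = 0`. -/
def CoaugDGCoalgebra.TwoReduced (C : CoaugDGCoalgebra) : Prop :=
  C.grading 0 = Submodule.span ℚ {C.one} ∧ C.grading 1 = ⊥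

/-- A twisting chain `τ : C ⇝ A`: a degree `-1` linear map satisfying
`d(τc) = -τ(dc) - (-1)^{|c₍₀₎|} τ(c₍₀₎)·τ(c₍₁₎)`. -/
structure TwistingChain (C : DGCoalgebra) (A : DGAlgebra) where
  toFun : C.carrier →ₗ[ℚ] A.carrier
  mem : ∀ (n : ℤ), ∀ x ∈ C.grading n, toFun x ∈ A.grading (n - 1)
  twist : A.d.comp toFun + toFun.comp C.d
      + A.mulMap.comp ((TensorProduct.map (toFun.comp (parityOf C.grading)) toFun).comp C.comul)
      = 0

/-- A left dg module over a dg algebra. -/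
structure DGModule (A : DGAlgebra) extends DGVect where
  smul : A.carrier →ₗ[ℚ] carrier →ₗ[ℚ] carrier
  smul_mem : ∀ (i j : ℤ) (a : A.carrier) (x : carrier), a ∈ A.grading i → x ∈ grading j →
    smul a x ∈ grading (i + j)
  one_smul' : ∀ x : carrier, smul A.one x = x
  mul_smul' : ∀ (a b : A.carrier) (x : carrier), smul (A.mul a b) x = smul a (smul b x)
  leibniz : ∀ (i : ℤ) (a : A.carrier) (x : carrier), a ∈ A.grading i →
    d (smul a x) = smul (A.d a) x + ((-1 : ℚ) ^ i) • smul a (d x)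

/-- The action of a dg module as a map out of the tensor product. -/
def DGModule.actionMap {A : DGAlgebra} (M : DGModule A) :
    A.carrier ⊗[ℚ] M.carrier →ₗ[ℚ] M.carrier := TensorProduct.lift M.smul

/-- A left dg comodule over a dg coalgebra. -/
structure DGComodule (C : DGCoalgebra) extends DGVect where
  coact : carrier →ₗ[ℚ] C.carrier ⊗[ℚ] carrier
  coact_mem : ∀ (n : ℤ), ∀ x ∈ grading n, coact x ∈ tensorGrading C.grading grading n
  coassoc : (TensorProduct.assoc ℚ C.carrier C.carrier carrier).toLinearMap.comp
      ((TensorProduct.map C.comul LinearMap.id).comp coact)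
      = (TensorProduct.map LinearMap.id coact).comp coact
  counit_coact : (TensorProduct.lid ℚ carrier).toLinearMap.comp
      ((TensorProduct.map C.counit LinearMap.id).comp coact) = LinearMap.id
  coact_chain : coact.comp d
      = (TensorProduct.map C.d LinearMap.id + TensorProduct.map (parityOf C.grading) d).comp coact

/-- Morphisms of dg modules: degree `0` graded chain maps commuting with the action. -/
def IsModuleHom (A : DGAlgebra) (M M' : DGModule A)
    (g : M.carrier →ₗ[ℚ] M'.carrier) : Prop :=
  (∀ (n : ℤ), ∀ x ∈ M.grading n, g x ∈ M'.grading n) ∧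
  g.comp M.d = M'.d.comp g ∧
  g.comp M.actionMap = M'.actionMap.comp (TensorProduct.map LinearMap.id g)

/-- Morphisms of dg comodules: degree `0` graded chain maps commuting with the coaction. -/
def IsComoduleHom (C : DGCoalgebra) (N N' : DGComodule C)
    (f : N.carrier →ₗ[ℚ] N'.carrier) : Prop :=
  (∀ (n : ℤ), ∀ x ∈ N.grading n, f x ∈ N'.grading n) ∧
  f.comp N.d = N'.d.comp f ∧
  (TensorProduct.map LinearMap.id f).comp N.coact = N'.coact.comp f

/-- The `A`-action on a twisted extension `A ⊗_τ N`: multiplication on the first factor. -/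
def extAction (A : DGAlgebra) (N : Type) [AddCommGroup N] [Module ℚ N] :
    A.carrier ⊗[ℚ] (A.carrier ⊗[ℚ] N) →ₗ[ℚ] A.carrier ⊗[ℚ] N :=
  (TensorProduct.map A.mulMap LinearMap.id).comp
    (TensorProduct.assoc ℚ A.carrier A.carrier N).symm.toLinearMap

/-- The differential of the twisted extension `A ⊗_τ N`:
`d(a ⊗ n) = da ⊗ n + (-1)^{|a|} a ⊗ dn - (-1)^{|a|} a·τ(n₍₀₎) ⊗ n₍₁₎`
for a `C`-comodule `(N, dN, ρ)`. -/
def extDiff (C : DGCoalgebra) (A : DGAlgebra) (τ : TwistingChain C A)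
    (N : Type) [AddCommGroup N] [Module ℚ N]
    (dN : N →ₗ[ℚ] N) (ρ : N →ₗ[ℚ] C.carrier ⊗[ℚ] N) :
    A.carrier ⊗[ℚ] N →ₗ[ℚ] A.carrier ⊗[ℚ] N :=
  TensorProduct.map A.d LinearMap.id + TensorProduct.map (parityOf A.grading) dN
    - (TensorProduct.map
        (A.mulMap.comp (TensorProduct.map (parityOf A.grading) τ.toFun)) LinearMap.id).comp
        ((TensorProduct.assoc ℚ A.carrier C.carrier N).symm.toLinearMap.comp
          (TensorProduct.map LinearMap.id ρ))

/-- The `C`-coaction on a twisted coextension `C ⊗^τ M`, namely `Δ ⊗ id`. -/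
def coextCoact (C : DGCoalgebra) (M : Type) [AddCommGroup M] [Module ℚ M] :
    C.carrier ⊗[ℚ] M →ₗ[ℚ] C.carrier ⊗[ℚ] (C.carrier ⊗[ℚ] M) :=
  (TensorProduct.assoc ℚ C.carrier C.carrier M).toLinearMap.comp
    (TensorProduct.map C.comul LinearMap.id)

/-- The differential of the twisted coextension `C ⊗^τ M`, expressed in terms of the map
`tact : C ⊗ M → M`, `c ⊗ m ↦ τ(c)·m`:
`d(c ⊗ m) = dc ⊗ m + (-1)^{|c|} c ⊗ dm + (-1)^{|c₍₀₎|} c₍₀₎ ⊗ τ(c₍₁₎)·m`. -/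
def coextDiffFrom (C : DGCoalgebra) (M : Type) [AddCommGroup M] [Module ℚ M]
    (dM : M →ₗ[ℚ] M) (tact : C.carrier ⊗[ℚ] M →ₗ[ℚ] M) :
    C.carrier ⊗[ℚ] M →ₗ[ℚ] C.carrier ⊗[ℚ] M :=
  TensorProduct.map C.d LinearMap.id + TensorProduct.map (parityOf C.grading) dM
    + (TensorProduct.map (parityOf C.grading) tact).comp (coextCoact C M)

/-- The differential of the twisted coextension `C ⊗^τ M` of an `A`-module `(M, dM, act)`. -/
def coextDiff (C : DGCoalgebra) (A : DGAlgebra) (τ : TwistingChain C A)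
    (M : Type) [AddCommGroup M] [Module ℚ M]
    (dM : M →ₗ[ℚ] M) (act : A.carrier ⊗[ℚ] M →ₗ[ℚ] M) :
    C.carrier ⊗[ℚ] M →ₗ[ℚ] C.carrier ⊗[ℚ] M :=
  coextDiffFrom C M dM (act.comp (TensorProduct.map τ.toFun LinearMap.id))

/-- Morphisms of dg algebras. -/
structure DGAlgebraHom (A B : DGAlgebra) where
  toLinearMap : A.carrier →ₗ[ℚ] B.carrier
  mem : ∀ (n : ℤ), ∀ x ∈ A.grading n, toLinearMap x ∈ B.grading n
  chain : toLinearMap.comp A.d = B.d.comp toLinearMap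
  map_one : toLinearMap A.one = B.one
  map_mul : ∀ x y : A.carrier, toLinearMap (A.mul x y) = B.mul (toLinearMap x) (toLinearMap y)

/-- Data exhibiting a dg algebra as the cobar construction `ΩC` of a coaugmented
dg coalgebra `C`, via the universal twisting chain `t : C ⇝ ΩC`:
dg algebra maps `ΩC → A` correspond bijectively to twisting chains `C ⇝ A`
vanishing on the coaugmentation. -/
structure CobarData (C : CoaugDGCoalgebra) where
  alg : DGAlgebra
  t : TwistingChain C.toDGCoalgebra alg
  t_one : t.toFun C.one = 0
  univ : ∀ (A : DGAlgebra) (τ : TwistingChain C.toDGCoalgebra A), τ.toFun C.one = 0 →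
    ∃! F : DGAlgebraHom alg A, F.toLinearMap.comp t.toFun = τ.toFun

/-- A morphism of `C`-comodules is a `t`-equivalence if the induced morphism of twisted
extensions `ΩC ⊗_t N → ΩC ⊗_t M` is a quasi-isomorphism. -/
def IsTEquiv (C : CoaugDGCoalgebra) (Ω : CobarData C) (N M : DGComodule C.toDGCoalgebra)
    (f : N.carrier →ₗ[ℚ] M.carrier) : Prop :=
  IsQuasiIso (extDiff C.toDGCoalgebra Ω.alg Ω.t N.carrier N.d N.coact)
    (extDiff C.toDGCoalgebra Ω.alg Ω.t M.carrier M.d M.coact)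
    (TensorProduct.map LinearMap.id f)

/-! ## Statement 2: the unit of the Koszul adjunction is a quasi-isomorphism -/

/-- The unit `N → t_* t^! N = C ⊗^t (ΩC ⊗_t N)`, `n ↦ n₍₀₎ ⊗ 1 ⊗ n₍₁₎`. -/
def cobarUnit (C : CoaugDGCoalgebra) (Ω : CobarData C)
    (N : DGComodule C.toDGCoalgebra) :
    N.carrier →ₗ[ℚ] C.carrier ⊗[ℚ] (Ω.alg.carrier ⊗[ℚ] N.carrier) :=
  (TensorProduct.map LinearMap.id
      ((TensorProduct.mk ℚ Ω.alg.carrier N.carrier) Ω.alg.one)).comp N.coact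

/-! The universal property of `ΩC` is applied twice. The zero twisting chain `C ⇝ ℚ` gives an
augmentation `e : ΩC → ℚ` with `e t = 0`. Twisting chains with values in a square-zero extension of
`ΩC` by a shift of the right module `C ⊗^t ΩC`, with a cone differential, then give a degree `1` map
`φ : ΩC → C ⊗^t ΩC` with `φ(ab) = φ(a)b + e(a)φ(b)` and `φ(tc) = (c - ε(c)1) ⊗ 1` that is a homotopy
from `a ↦ e(a) 1 ⊗ 1` to `a ↦ 1 ⊗ a`. Consequently `c ⊗ a ⊗ n ↦ ε(c) φ(a) ⊗ n` is a homotopy which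
exhibits `N` as a deformation retract of `C ⊗^t (ΩC ⊗_t N)`: the inclusion is the unit and the
retraction is `c ⊗ a ⊗ n ↦ ε(c)e(a)n`. -/

section GradedVectorSpaces

variable {V W U : Type} [AddCommGroup V] [Module ℚ V] [AddCommGroup W] [Module ℚ W]
  [AddCommGroup U] [Module ℚ U]
variable (g : ℤ → Submodule ℚ V) (g' : ℤ → Submodule ℚ W)

section Parity

variable [DirectSum.Decomposition g]

theorem parityOf_of_mem {n : ℤ} {x : V} (hx : x ∈ g n) : parityOf g x = (-1 : ℚ) ^ n • x := by
  have hdec : DirectSum.decomposeLinearEquiv g x = DirectSum.lof ℚ ℤ (fun i => g i) n ⟨x, hx⟩ :=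
    DirectSum.decomposeLinearEquiv_apply_coe g n ⟨x, hx⟩
  simp [parityOf, signOpOf, hdec]

theorem linearMap_ext_homogeneous {f f' : V →ₗ[ℚ] W} (h : ∀ n, ∀ x ∈ g n, f x = f' x) :
    f = f' :=
  DirectSum.decompose_lhom_ext g fun n => LinearMap.ext fun x => h n x x.2

theorem parityOf_parityOf (x : V) : parityOf g (parityOf g x) = x := by
  suffices (parityOf g).comp (parityOf g) = LinearMap.id from LinearMap.congr_fun this x
  refine linearMap_ext_homogeneous g fun n x hx => ?_
  have hsq : (-1 : ℚ) ^ n * (-1 : ℚ) ^ n = 1 := by rw [← mul_zpow]; simp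
  simp [parityOf_of_mem g hx, smul_smul, hsq]

variable {g} in
theorem parityOf_apply_of_degree [DirectSum.Decomposition g'] (k : ℤ) {f : V →ₗ[ℚ] W}
    (hf : ∀ n, ∀ x ∈ g n, f x ∈ g' (n + k)) (x : V) :
    parityOf g' (f x) = (-1 : ℚ) ^ k • f (parityOf g x) := by
  suffices (parityOf g').comp f = (-1 : ℚ) ^ k • f.comp (parityOf g) from
    LinearMap.congr_fun this x
  refine linearMap_ext_homogeneous g fun n x hx => ?_
  simp [parityOf_of_mem g hx, parityOf_of_mem g' (hf n x hx), smul_smul,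
    zpow_add₀ (show (-1 : ℚ) ≠ 0 by norm_num), mul_comm]

variable {g} in
theorem apply_parityOf_of_concentrated {f : V →ₗ[ℚ] W} (hf : ∀ n ≠ 0, ∀ x ∈ g n, f x = 0)
    (x : V) : f (parityOf g x) = f x := by
  suffices f.comp (parityOf g) = f from LinearMap.congr_fun this x
  refine linearMap_ext_homogeneous g fun n x hx => ?_
  obtain rfl | hn := eq_or_ne n 0
  · simp [parityOf_of_mem g hx]
  · simp [parityOf_of_mem g hx, hf n hn x hx]

end Parity

/-- A decomposition built from a linear section `f` of the canonical map `⨁ G n → V` that puts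
`G n` into the `n`-th summand. -/
abbrev decompositionOfSection {G : ℤ → Submodule ℚ V} (f : V →ₗ[ℚ] DirectSum ℤ fun n => G n)
    (hsection : ∀ x, DirectSum.coeLinearMap G (f x) = x)
    (hsummand : ∀ n, ∀ x ∈ G n, f x ∈ LinearMap.range (DirectSum.lof ℚ ℤ (fun n => G n) n)) :
    DirectSum.Decomposition G :=
  .ofLinearMap G f (LinearMap.ext hsection) <| DirectSum.linearMap_ext _ fun n => by
    ext1 ⟨x, hx⟩
    obtain ⟨y, hy⟩ := hsummand n x hx
    obtain rfl : y = ⟨x, hx⟩ := Subtype.ext (by simpa [← hy] using hsection x)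
    simp [← hy]

variable {g g'} in
theorem tmul_mem_tensorGrading {i j n : ℤ} {x : V} {y : W} (hx : x ∈ g i) (hy : y ∈ g' j)
    (hn : i + j = n) : x ⊗ₜ[ℚ] y ∈ tensorGrading g g' n :=
  Submodule.mem_iSup_of_mem ⟨(i, j), hn⟩ ⟨(⟨x, hx⟩ : g i) ⊗ₜ (⟨y, hy⟩ : g' j), by simp⟩

variable {g g'} in
theorem tensorGrading_le {n : ℤ} {S : Submodule ℚ (V ⊗[ℚ] W)}
    (h : ∀ i j x y, x ∈ g i → y ∈ g' j → i + j = n → x ⊗ₜ[ℚ] y ∈ S) :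
    tensorGrading g g' n ≤ S := by
  refine iSup_le ?_
  rintro ⟨⟨i, j⟩, hn⟩ _ ⟨z, rfl⟩
  induction z with
  | zero => simp
  | tmul x y => simpa using h i j x y x.2 y.2 hn
  | add z z' hz hz' => simpa only [map_add] using S.add_mem hz hz'

variable [DirectSum.Decomposition g] [DirectSum.Decomposition g']

theorem tensor_ext_homogeneous {f f' : V ⊗[ℚ] W →ₗ[ℚ] U}
    (h : ∀ i j, ∀ x ∈ g i, ∀ y ∈ g' j, f (x ⊗ₜ y) = f' (x ⊗ₜ y)) : f = f' :=
  TensorProduct.ext <| linearMap_ext_homogeneous g fun i x hx =>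
    linearMap_ext_homogeneous g' fun j y hy => h i j x hx y hy

/-- The map sending `x ⊗ y`, for homogeneous `x` and `y`, to the summand of degree
`|x| + |y|`. -/
def tensorDecompose : V ⊗[ℚ] W →ₗ[ℚ] DirectSum ℤ fun n => tensorGrading g g' n :=
  (DirectSum.toModule ℚ (ℤ × ℤ) _ fun p =>
      (DirectSum.lof ℚ ℤ (fun n => tensorGrading g g' n) (p.1 + p.2)).comp <|
        (TensorProduct.map (g p.1).subtype (g' p.2).subtype).codRestrict _ fun z =>
          Submodule.mem_iSup_of_mem ⟨p, rfl⟩ ⟨z, rfl⟩).comp <|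
    (TensorProduct.directSum ℚ ℚ (fun i => g i) (fun j => g' j)).toLinearMap.comp <|
      TensorProduct.map (DirectSum.decomposeLinearEquiv g).toLinearMap
        (DirectSum.decomposeLinearEquiv g').toLinearMap

variable {g g'} in
theorem tensorDecompose_tmul {i j : ℤ} {x : V} {y : W} (hx : x ∈ g i) (hy : y ∈ g' j) :
    tensorDecompose g g' (x ⊗ₜ y) = DirectSum.lof ℚ ℤ (fun n => tensorGrading g g' n) (i + j)
      ⟨x ⊗ₜ y, tmul_mem_tensorGrading hx hy rfl⟩ := by
  lift x to g i using hx
  lift y to g' j using hy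
  simp only [tensorDecompose, LinearMap.comp_apply, TensorProduct.map_tmul, LinearEquiv.coe_coe,
    DirectSum.decomposeLinearEquiv_apply_coe, TensorProduct.directSum_lof_tmul_lof,
    DirectSum.toModule_lof]
  rfl

instance tensorGradingDecomposition : DirectSum.Decomposition (tensorGrading g g') :=
  decompositionOfSection (tensorDecompose g g')
    (LinearMap.congr_fun <| show (DirectSum.coeLinearMap _).comp _ = LinearMap.id from
      tensor_ext_homogeneous g g' fun i j x hx y hy => by simp [tensorDecompose_tmul hx hy])
    fun n => tensorGrading_le (S := (LinearMap.range _).comap _) fun i j x y hx hy hn => by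
      subst hn
      exact ⟨_, (tensorDecompose_tmul hx hy).symm⟩

theorem parityOf_tensorGrading :
    parityOf (tensorGrading g g') = TensorProduct.map (parityOf g) (parityOf g') :=
  tensor_ext_homogeneous g g' fun i j x hx y hy => by
    rw [parityOf_of_mem _ (tmul_mem_tensorGrading hx hy rfl), TensorProduct.map_tmul,
      parityOf_of_mem g hx, parityOf_of_mem g' hy, TensorProduct.smul_tmul_smul,
      zpow_add₀ (by norm_num)]

/-- The grading of `V ⊕ W[-1]`, the underlying graded space of a mapping cone. -/
def coneGrading (g : ℤ → Submodule ℚ V) (g' : ℤ → Submodule ℚ W) (n : ℤ) :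
    Submodule ℚ (V × W) := (g n).prod (g' (n + 1))

/-- The map sending `(x, 0)` to the summand of degree `|x|` and `(0, y)` to that of degree
`|y| - 1`. -/
def coneDecompose : V × W →ₗ[ℚ] DirectSum ℤ fun n => coneGrading g g' n :=
  LinearMap.coprod
    ((DirectSum.toModule ℚ ℤ _ fun n => (DirectSum.lof ℚ ℤ (fun n => coneGrading g g' n) n).comp <|
        ((LinearMap.inl ℚ V W).comp (g n).subtype).codRestrict _
          fun x => ⟨x.2, Submodule.zero_mem _⟩).comp
      (DirectSum.decomposeLinearEquiv g).toLinearMap)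
    ((DirectSum.toModule ℚ ℤ _ fun n =>
        (DirectSum.lof ℚ ℤ (fun n => coneGrading g g' n) (n - 1)).comp <|
          ((LinearMap.inr ℚ V W).comp (g' n).subtype).codRestrict _
            fun y => ⟨Submodule.zero_mem _, by simp⟩).comp
      (DirectSum.decomposeLinearEquiv g').toLinearMap)

variable {g} in
theorem coneDecompose_inl {n : ℤ} {x : V} (hx : x ∈ g n) :
    coneDecompose g g' (x, 0) = DirectSum.lof ℚ ℤ (fun n => coneGrading g g' n) n
      ⟨(x, 0), hx, Submodule.zero_mem _⟩ := by
  lift x to g n using hx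
  simp only [coneDecompose, LinearMap.coprod_apply, LinearMap.comp_apply, LinearEquiv.coe_coe,
    DirectSum.decomposeLinearEquiv_apply_coe, map_zero, add_zero, DirectSum.toModule_lof]
  rfl

variable {g'} in
theorem coneDecompose_inr {m n : ℤ} {y : W} (hy : y ∈ g' m) (hn : n + 1 = m) :
    coneDecompose g g' (0, y) = DirectSum.lof ℚ ℤ (fun n => coneGrading g g' n) n
      ⟨(0, y), Submodule.zero_mem _, hn ▸ hy⟩ := by
  lift y to g' m using hy
  obtain rfl : n = m - 1 := by lia
  simp only [coneDecompose, LinearMap.coprod_apply, LinearMap.comp_apply, LinearEquiv.coe_coe,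
    DirectSum.decomposeLinearEquiv_apply_coe, map_zero, zero_add, DirectSum.toModule_lof]
  rfl

instance coneGradingDecomposition : DirectSum.Decomposition (coneGrading g g') :=
  decompositionOfSection (coneDecompose g g')
    (LinearMap.congr_fun <| show (DirectSum.coeLinearMap _).comp _ = LinearMap.id from
      LinearMap.prod_ext
        (linearMap_ext_homogeneous g fun n x hx => by simp [coneDecompose_inl g' hx])
        (linearMap_ext_homogeneous g' fun n y hy => by
          simp [coneDecompose_inr g hy (sub_add_cancel n 1)]))
    fun n ⟨x, y⟩ ⟨hx, hy⟩ => by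
      have hsplit : ((x, y) : V × W) = (x, 0) + (0, y) := by simp
      rw [hsplit, map_add, coneDecompose_inl g' hx, coneDecompose_inr g hy rfl]
      exact Submodule.add_mem _ ⟨_, rfl⟩ ⟨_, rfl⟩

end GradedVectorSpaces

/-- The grading of `ℚ` concentrated in degree `0`. -/
def ratGrading (n : ℤ) : Submodule ℚ ℚ := if n = 0 then ⊤ else ⊥

theorem mem_ratGrading {n : ℤ} {x : ℚ} : x ∈ ratGrading n ↔ n = 0 ∨ x = 0 := by
  by_cases hn : n = 0 <;> simp [ratGrading, hn]

instance ratGradingDecomposition : DirectSum.Decomposition ratGrading :=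
  decompositionOfSection
    ((DirectSum.lof ℚ ℤ (fun n => ratGrading n) 0).comp <|
      LinearMap.id.codRestrict (ratGrading 0) fun _ => mem_ratGrading.2 (.inl rfl))
    (fun x => by simp)
    fun n x hx => by
      obtain rfl | rfl := mem_ratGrading.1 hx
      · exact ⟨_, rfl⟩
      · exact ⟨0, by simp⟩

section Elementwise

theorem DGVect.d_d (V : DGVect) (x : V.carrier) : V.d (V.d x) = 0 := LinearMap.congr_fun V.d_sq x

theorem DGVect.parity_d (V : DGVect) (x : V.carrier) :
    parityOf V.grading (V.d x) = -V.d (parityOf V.grading x) := by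
  simpa using parityOf_apply_of_degree V.grading (-1) V.d_mem x

theorem DGAlgebra.d_one (A : DGAlgebra) : A.d A.one = 0 := by
  simpa [A.one_mul', A.mul_one'] using A.leibniz 0 A.one A.one A.one_mem

theorem DGModule.actionMap_tmul {A : DGAlgebra} (M : DGModule A) (a : A.carrier) (x : M.carrier) :
    M.actionMap (a ⊗ₜ x) = M.smul a x := rfl

theorem DGModule.d_smul {A : DGAlgebra} (M : DGModule A) (a : A.carrier) (x : M.carrier) :
    M.d (M.smul a x) = M.smul (A.d a) x + M.smul (parityOf A.grading a) (M.d x) := by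
  suffices M.d.comp (M.smul.flip x)
      = (M.smul.flip x).comp A.d + (M.smul.flip (M.d x)).comp (parityOf A.grading) from
    LinearMap.congr_fun this a
  refine linearMap_ext_homogeneous A.grading fun i a ha => ?_
  simp [M.leibniz i a x ha, parityOf_of_mem A.grading ha]

theorem DGCoalgebra.counit_d (C : DGCoalgebra) (c : C.carrier) : C.counit (C.d c) = 0 :=
  LinearMap.congr_fun C.counit_chain c

theorem DGCoalgebra.counit_parity (C : DGCoalgebra) (c : C.carrier) :
    C.counit (parityOf C.grading c) = C.counit c :=
  apply_parityOf_of_concentrated C.counit_zero c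

theorem DGCoalgebra.comul_parity (C : DGCoalgebra) (c : C.carrier) :
    C.comul (parityOf C.grading c)
      = TensorProduct.map (parityOf C.grading) (parityOf C.grading) (C.comul c) := by
  simpa [parityOf_tensorGrading] using
    (parityOf_apply_of_degree (tensorGrading C.grading C.grading) 0 (f := C.comul)
      (by simpa using C.comul_mem) c).symm

/-- The contraction `c ⊗ m ↦ ε(c)m` of `C ⊗ M` against the counit. -/
def DGCoalgebra.counitMap (C : DGCoalgebra) (M : Type) [AddCommGroup M] [Module ℚ M] :
    C.carrier ⊗[ℚ] M →ₗ[ℚ] M :=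
  (TensorProduct.lid ℚ M).toLinearMap.comp (TensorProduct.map C.counit LinearMap.id)

theorem DGCoalgebra.counitMap_tmul (C : DGCoalgebra) {M : Type} [AddCommGroup M] [Module ℚ M]
    (c : C.carrier) (m : M) : C.counitMap M (c ⊗ₜ m) = C.counit c • m := by
  simp [counitMap]

theorem DGCoalgebra.counitMap_comul (C : DGCoalgebra) (c : C.carrier) :
    C.counitMap C.carrier (C.comul c) = c :=
  LinearMap.congr_fun C.counit_comul_left c

theorem DGComodule.counitMap_coact {C : DGCoalgebra} (N : DGComodule C) (n : N.carrier) :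
    C.counitMap N.carrier (N.coact n) = n :=
  LinearMap.congr_fun N.counit_coact n

theorem CoaugDGCoalgebra.d_one (C : CoaugDGCoalgebra) : C.d C.one = 0 := by
  have hd := C.d_mem 0 C.one C.one_mem
  rwa [C.nonneg (0 - 1) (by norm_num), Submodule.mem_bot] at hd

theorem CoaugDGCoalgebra.parity_one (C : CoaugDGCoalgebra) :
    parityOf C.grading C.one = C.one := by
  simp [parityOf_of_mem C.grading C.one_mem]

theorem TwistingChain.parity_apply {C : DGCoalgebra} {A : DGAlgebra} (τ : TwistingChain C A)
    (c : C.carrier) :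
    parityOf A.grading (τ.toFun c) = -τ.toFun (parityOf C.grading c) := by
  simpa using parityOf_apply_of_degree A.grading (-1) τ.mem c

theorem TwistingChain.mulMap_comul {C : DGCoalgebra} {A : DGAlgebra} (τ : TwistingChain C A)
    (c : C.carrier) :
    A.mulMap (TensorProduct.map (τ.toFun.comp (parityOf C.grading)) τ.toFun (C.comul c))
      = -A.d (τ.toFun c) - τ.toFun (C.d c) := by
  have htwist : A.d (τ.toFun c) + τ.toFun (C.d c) + A.mulMap
      (TensorProduct.map (τ.toFun.comp (parityOf C.grading)) τ.toFun (C.comul c)) = 0 :=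
    LinearMap.congr_fun τ.twist c
  rw [← neg_add', eq_neg_iff_add_eq_zero, add_comm, htwist]

end Elementwise

section TwistedCoextension

variable {C : DGCoalgebra} {A : DGAlgebra} (τ : TwistingChain C A)

section Differential

variable {M : Type} [AddCommGroup M] [Module ℚ M] (dM : M →ₗ[ℚ] M)
  (act : A.carrier ⊗[ℚ] M →ₗ[ℚ] M)

/-- The map `x ⊗ y ↦ (-1)^{|x|} x ⊗ τ(y)m` that, applied to `Δc`, is the twisting term in the
differential of `c ⊗ m ∈ C ⊗^τ M`. -/
def coextTwist (m : M) : C.carrier ⊗[ℚ] C.carrier →ₗ[ℚ] C.carrier ⊗[ℚ] M :=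
  TensorProduct.map (parityOf C.grading)
    ((act.comp ((TensorProduct.mk ℚ A.carrier M).flip m)).comp τ.toFun)

theorem coextTwist_tmul (m : M) (x y : C.carrier) :
    coextTwist τ act m (x ⊗ₜ y) = parityOf C.grading x ⊗ₜ act (τ.toFun y ⊗ₜ m) := rfl

theorem coextDiff_tmul (c : C.carrier) (m : M) :
    coextDiff C A τ M dM act (c ⊗ₜ m)
      = C.d c ⊗ₜ m + parityOf C.grading c ⊗ₜ dM m + coextTwist τ act m (C.comul c) := by
  simp only [coextDiff, coextDiffFrom, coextCoact, LinearMap.add_apply, TensorProduct.map_tmul,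
    LinearMap.id_apply, LinearMap.comp_apply, LinearEquiv.coe_coe]
  congr 1
  induction C.comul c with
  | zero => simp
  | tmul x y => simp [coextTwist_tmul]
  | add z z' hz hz' => simp only [TensorProduct.add_tmul, map_add, hz, hz']

theorem counitMap_coextTwist (m : M) (z : C.carrier ⊗[ℚ] C.carrier) :
    C.counitMap M (coextTwist τ act m z) = act (τ.toFun (C.counitMap C.carrier z) ⊗ₜ m) := by
  induction z with
  | zero => simp
  | tmul x y =>
    simp [coextTwist_tmul, C.counitMap_tmul, C.counit_parity, ← TensorProduct.smul_tmul']
  | add z z' hz hz' => simp only [TensorProduct.add_tmul, map_add, hz, hz']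

theorem counitMap_coextDiff (c : C.carrier) (m : M) :
    C.counitMap M (coextDiff C A τ M dM act (c ⊗ₜ m))
      = C.counit c • dM m + act (τ.toFun c ⊗ₜ m) := by
  simp [coextDiff_tmul, counitMap_coextTwist, C.counitMap_tmul, C.counitMap_comul, C.counit_d,
    C.counit_parity]

end Differential

variable (M : DGModule A)

theorem coextDiff_mem {n : ℤ} {z : C.carrier ⊗[ℚ] M.carrier}
    (hz : z ∈ tensorGrading C.grading M.grading n) :
    coextDiff C A τ M.carrier M.d M.actionMap z
      ∈ tensorGrading C.grading M.grading (n - 1) := by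
  have hP {i : ℤ} {c : C.carrier} (hc : c ∈ C.grading i) :
      parityOf C.grading c ∈ C.grading i := by
    simpa only [parityOf_of_mem C.grading hc] using Submodule.smul_mem _ _ hc
  refine tensorGrading_le (S := (tensorGrading C.grading M.grading (n - 1)).comap
    (coextDiff C A τ M.carrier M.d M.actionMap)) (fun i j c m hc hm hn => ?_) hz
  rw [Submodule.mem_comap, coextDiff_tmul]
  refine add_mem (add_mem ?_ ?_) ?_
  · exact tmul_mem_tensorGrading (C.d_mem i c hc) hm (by lia)
  · exact tmul_mem_tensorGrading (hP hc) (M.d_mem j m hm) (by lia)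
  · refine tensorGrading_le (S := (tensorGrading C.grading M.grading (n - 1)).comap _)
      (fun k l x y hx hy hkl => ?_) (C.comul_mem i c hc)
    exact tmul_mem_tensorGrading (hP hx) (M.smul_mem _ _ _ _ (τ.mem l y hy) hm) (by lia)

/-- The contraction `x ⊗ y ⊗ z ↦ (-1)^{|y|} x ⊗ τ(y)τ(z)m`, through which the two ways of
composing the twist of `C ⊗^τ M` with itself factor. -/
def doubleTwist (m : M.carrier) :
    C.carrier ⊗[ℚ] (C.carrier ⊗[ℚ] C.carrier) →ₗ[ℚ] C.carrier ⊗[ℚ] M.carrier :=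
  TensorProduct.map LinearMap.id ((M.smul.flip m).comp (A.mulMap.comp
    (TensorProduct.map (τ.toFun.comp (parityOf C.grading)) τ.toFun)))

theorem coextTwist_comul_parity (x y : C.carrier) (m : M.carrier) :
    coextTwist τ M.actionMap (M.smul (τ.toFun y) m) (C.comul (parityOf C.grading x))
      = doubleTwist τ M m (TensorProduct.assoc ℚ _ _ _ (C.comul x ⊗ₜ y)) := by
  rw [C.comul_parity]
  induction C.comul x with
  | zero => simp
  | add z z' hz hz' => simp only [TensorProduct.add_tmul, map_add, hz, hz']
  | tmul u v =>
    simp [coextTwist_tmul, doubleTwist, M.actionMap_tmul, DGAlgebra.mulMap, parityOf_parityOf,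
      M.mul_smul']

theorem doubleTwist_comul (x y : C.carrier) (m : M.carrier) :
    doubleTwist τ M m (x ⊗ₜ C.comul y)
      = -(x ⊗ₜ M.smul (A.d (τ.toFun y)) m) - x ⊗ₜ M.smul (τ.toFun (C.d y)) m := by
  simp [doubleTwist, τ.mulMap_comul, TensorProduct.tmul_sub, TensorProduct.tmul_neg]

-- The twisting chain equation turns the terms linear in `τ` into quadratic ones; the right-hand
-- side vanishes for `z = Δc` by coassociativity.
theorem coextDiff_coextTwist (m : M.carrier) (z : C.carrier ⊗[ℚ] C.carrier) :
    coextDiff C A τ M.carrier M.d M.actionMap (coextTwist τ M.actionMap m z)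
      + coextTwist τ M.actionMap m (TensorProduct.map C.d LinearMap.id z
          + TensorProduct.map (parityOf C.grading) C.d z)
      + coextTwist τ M.actionMap (M.d m)
          (TensorProduct.map (parityOf C.grading) (parityOf C.grading) z)
      = doubleTwist τ M m (TensorProduct.assoc ℚ _ _ _
            (TensorProduct.map C.comul LinearMap.id z))
        - doubleTwist τ M m (TensorProduct.map LinearMap.id C.comul z) := by
  induction z with
  | zero => simp
  | add z z' hz hz' =>
    simp only [map_add] at hz hz' ⊢
    rw [add_sub_add_comm, ← hz, ← hz']
    abel
  | tmul x y =>
    simp only [TensorProduct.map_tmul, LinearMap.id_apply, map_add, coextTwist_tmul,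
      M.actionMap_tmul, coextDiff_tmul, coextTwist_comul_parity, doubleTwist_comul, M.d_smul,
      τ.parity_apply, parityOf_parityOf, C.toDGVect.parity_d, map_neg, LinearMap.neg_apply,
      TensorProduct.tmul_add, TensorProduct.tmul_neg, TensorProduct.neg_tmul]
    abel

theorem coextDiff_coextDiff (z : C.carrier ⊗[ℚ] M.carrier) :
    coextDiff C A τ M.carrier M.d M.actionMap
      (coextDiff C A τ M.carrier M.d M.actionMap z) = 0 := by
  induction z with
  | zero => simp
  | add z z' hz hz' => simp only [map_add, hz, hz', add_zero]
  | tmul c m =>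
    have hcoassoc : TensorProduct.assoc ℚ _ _ _
        (TensorProduct.map C.comul LinearMap.id (C.comul c))
          = TensorProduct.map LinearMap.id C.comul (C.comul c) :=
      LinearMap.congr_fun C.coassoc c
    have hchain : C.comul (C.d c) = TensorProduct.map C.d LinearMap.id (C.comul c)
        + TensorProduct.map (parityOf C.grading) C.d (C.comul c) :=
      LinearMap.congr_fun C.comul_chain c
    have htwist := coextDiff_coextTwist τ M m (C.comul c)
    rw [hcoassoc, sub_self, ← hchain, ← C.comul_parity] at htwist
    simp only [coextDiff_tmul, map_add, C.toDGVect.parity_d, C.toDGVect.d_d, M.toDGVect.d_d,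
      TensorProduct.zero_tmul, TensorProduct.tmul_zero, TensorProduct.neg_tmul]
    refine Eq.trans ?_ htwist
    abel

end TwistedCoextension

/-- A right dg module over a dg algebra. -/
structure RightDGModule (A : DGAlgebra) extends DGVect where
  act : carrier →ₗ[ℚ] A.carrier →ₗ[ℚ] carrier
  act_mem : ∀ (i j : ℤ) (x : carrier) (a : A.carrier), x ∈ grading i → a ∈ A.grading j →
    act x a ∈ grading (i + j)
  act_one : ∀ x : carrier, act x A.one = x
  act_mul : ∀ (x : carrier) (a b : A.carrier), act x (A.mul a b) = act (act x a) b
  leibniz : ∀ (i : ℤ) (x : carrier) (a : A.carrier), x ∈ grading i →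
    d (act x a) = act (d x) a + ((-1 : ℚ) ^ i) • act x (A.d a)

/-- A dg algebra as a left dg module over itself. -/
def DGAlgebra.leftModule (A : DGAlgebra) : DGModule A where
  toDGVect := A.toDGVect
  smul := A.mul
  smul_mem := A.mul_mem
  one_smul' := A.one_mul'
  mul_smul' := A.mul_assoc'
  leibniz := A.leibniz

/-- A dg algebra as a right dg module over itself. -/
def DGAlgebra.rightModule (A : DGAlgebra) : RightDGModule A where
  toDGVect := A.toDGVect
  act := A.mul
  act_mem := A.mul_mem
  act_one := A.mul_one'
  act_mul x a b := (A.mul_assoc' x a b).symm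
  leibniz := A.leibniz

theorem DGAlgebra.d_mul (A : DGAlgebra) (a b : A.carrier) :
    A.d (A.mul a b) = A.mul (A.d a) b + A.mul (parityOf A.grading a) (A.d b) :=
  A.leftModule.d_smul a b

section CoextensionModule

variable {C : DGCoalgebra} {A : DGAlgebra} (τ : TwistingChain C A)

/-- Right multiplication of `A` on the second factor of `C ⊗ A`. -/
def coextRightAct (C : DGCoalgebra) (A : DGAlgebra) :
    C.carrier ⊗[ℚ] A.carrier →ₗ[ℚ] A.carrier →ₗ[ℚ] C.carrier ⊗[ℚ] A.carrier :=
  ((LinearMap.lTensorHom C.carrier).comp A.mul.flip).flip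

theorem coextRightAct_tmul (c : C.carrier) (a b : A.carrier) :
    coextRightAct C A (c ⊗ₜ a) b = c ⊗ₜ A.mul a b := rfl

theorem coextTwist_mul (a b : A.carrier) (z : C.carrier ⊗[ℚ] C.carrier) :
    coextTwist τ A.mulMap (A.mul a b) z = coextRightAct C A (coextTwist τ A.mulMap a z) b := by
  induction z with
  | zero => simp
  | tmul x y => simp [coextTwist_tmul, coextRightAct_tmul, DGAlgebra.mulMap, A.mul_assoc']
  | add z z' hz hz' => simp only [map_add, LinearMap.add_apply, hz, hz']

theorem coextDiff_rightAct (z : C.carrier ⊗[ℚ] A.carrier) (b : A.carrier) :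
    coextDiff C A τ A.carrier A.d A.mulMap (coextRightAct C A z b)
      = coextRightAct C A (coextDiff C A τ A.carrier A.d A.mulMap z) b
        + coextRightAct C A (parityOf (tensorGrading C.grading A.grading) z) (A.d b) := by
  rw [parityOf_tensorGrading]
  induction z with
  | zero => simp
  | tmul c a =>
    simp only [coextRightAct_tmul, coextDiff_tmul, coextTwist_mul, A.d_mul, map_add,
      LinearMap.add_apply, TensorProduct.map_tmul, TensorProduct.tmul_add]
    abel
  | add z z' hz hz' =>
    simp only [map_add, LinearMap.add_apply, hz, hz']
    abel

/-- The twisted coextension `C ⊗^τ A`, with `A` acting by right multiplication. -/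
abbrev TwistingChain.coextModule : RightDGModule A where
  carrier := C.carrier ⊗[ℚ] A.carrier
  grading := tensorGrading C.grading A.grading
  d := coextDiff C A τ A.carrier A.d A.mulMap
  d_mem _ _ hz := coextDiff_mem τ A.leftModule hz
  d_sq := LinearMap.ext (coextDiff_coextDiff τ A.leftModule)
  act := coextRightAct C A
  act_mem i j z b hz hb := by
    refine tensorGrading_le (S := (tensorGrading C.grading A.grading (i + j)).comap
      ((coextRightAct C A).flip b)) (fun k l c a hc ha hkl => ?_) hz
    exact tmul_mem_tensorGrading hc (A.mul_mem l j a b ha hb) (by lia)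
  act_one z := by
    induction z with
    | zero => simp
    | tmul c a => rw [coextRightAct_tmul, A.mul_one']
    | add z z' hz hz' => rw [map_add, LinearMap.add_apply, hz, hz']
  act_mul z a b := by
    induction z with
    | zero => simp
    | tmul c a' => simp only [coextRightAct_tmul, A.mul_assoc']
    | add z z' hz hz' => simp only [map_add, LinearMap.add_apply, hz, hz']
  leibniz i z b hz := by
    rw [coextDiff_rightAct, parityOf_of_mem _ hz, map_smul, LinearMap.smul_apply]

end CoextensionModule

section TwistedTensor

variable {C : DGCoalgebra} {A : DGAlgebra} (τ : TwistingChain C A) (M : RightDGModule A)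
  (N : DGComodule C) {V : Type} [AddCommGroup V] [Module ℚ V]

/-- The differential of the twisted tensor product `M ⊗_τ N`:
`d(m ⊗ n) = dm ⊗ n + (-1)^{|m|} m ⊗ dn - (-1)^{|m|} m·τ(n₍₀₎) ⊗ n₍₁₎`.
It is `A ⊗_τ N` for `M = A` and `C ⊗^τ (A ⊗_τ N)`, up to associativity, for `M = C ⊗^τ A`. -/
def twistedDiff : M.carrier ⊗[ℚ] N.carrier →ₗ[ℚ] M.carrier ⊗[ℚ] N.carrier :=
  TensorProduct.map M.d LinearMap.id + TensorProduct.map (parityOf M.grading) N.d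
    - (TensorProduct.map ((TensorProduct.lift M.act).comp
          (TensorProduct.map (parityOf M.grading) τ.toFun)) LinearMap.id).comp
        ((TensorProduct.assoc ℚ M.carrier C.carrier N.carrier).symm.toLinearMap.comp
          (TensorProduct.map LinearMap.id N.coact))

theorem twistedDiff_tmul (m : M.carrier) (n : N.carrier) :
    twistedDiff τ M N (m ⊗ₜ n) = M.d m ⊗ₜ n + parityOf M.grading m ⊗ₜ N.d n
      - TensorProduct.map ((M.act (parityOf M.grading m)).comp τ.toFun) LinearMap.id
          (N.coact n) := by
  simp only [twistedDiff, LinearMap.add_apply, LinearMap.sub_apply, TensorProduct.map_tmul,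
    LinearMap.id_apply, LinearMap.comp_apply, LinearEquiv.coe_coe]
  congr 1
  induction N.coact n with
  | zero => simp
  | tmul x y => simp
  | add z z' hz hz' => simp only [TensorProduct.tmul_add, map_add, hz, hz']

theorem extDiff_tmul (a : A.carrier) (n : N.carrier) :
    extDiff C A τ N.carrier N.d N.coact (a ⊗ₜ n)
      = A.d a ⊗ₜ n + parityOf A.grading a ⊗ₜ N.d n
        - TensorProduct.map ((A.mul (parityOf A.grading a)).comp τ.toFun) LinearMap.id
            (N.coact n) :=
  twistedDiff_tmul τ A.rightModule N a n

theorem extAction_tmul (a b : A.carrier) (v : V) :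
    extAction A V (a ⊗ₜ (b ⊗ₜ v)) = A.mul a b ⊗ₜ v := rfl

theorem coextTwist_extAction (a : A.carrier) (v : V) (z : C.carrier ⊗[ℚ] C.carrier) :
    coextTwist τ (extAction A V) (a ⊗ₜ v) z
      = TensorProduct.assoc ℚ _ _ _ (coextTwist τ A.mulMap a z ⊗ₜ v) := by
  induction z with
  | zero => simp
  | tmul x y => rfl
  | add z z' hz hz' => simp only [map_add, hz, hz', TensorProduct.add_tmul]

theorem tmul_map_mul (c : C.carrier) (a : A.carrier) (z : C.carrier ⊗[ℚ] V) :
    c ⊗ₜ TensorProduct.map ((A.mul a).comp τ.toFun) LinearMap.id z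
      = TensorProduct.assoc ℚ _ _ _
          (TensorProduct.map ((coextRightAct C A (c ⊗ₜ a)).comp τ.toFun) LinearMap.id z) := by
  induction z with
  | zero => simp
  | tmul x y => rfl
  | add z z' hz hz' => simp only [map_add, hz, hz', TensorProduct.tmul_add]

theorem coextDiff_assoc (z : C.carrier ⊗[ℚ] A.carrier) (n : N.carrier) :
    coextDiff C A τ (A.carrier ⊗[ℚ] N.carrier) (extDiff C A τ N.carrier N.d N.coact)
        (extAction A N.carrier) (TensorProduct.assoc ℚ _ _ _ (z ⊗ₜ n))
      = TensorProduct.assoc ℚ _ _ _ (twistedDiff τ τ.coextModule N (z ⊗ₜ n)) := by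
  induction z with
  | zero => simp
  | add z z' hz hz' => simp only [TensorProduct.add_tmul, map_add, hz, hz']
  | tmul c a =>
    have hparity : parityOf τ.coextModule.grading (c ⊗ₜ a)
        = parityOf C.grading c ⊗ₜ parityOf A.grading a :=
      LinearMap.congr_fun (parityOf_tensorGrading C.grading A.grading) (c ⊗ₜ a)
    have hd : τ.coextModule.d (c ⊗ₜ a) = C.d c ⊗ₜ a + parityOf C.grading c ⊗ₜ A.d a
        + coextTwist τ A.mulMap a (C.comul c) := coextDiff_tmul τ A.d A.mulMap c a
    rw [TensorProduct.assoc_tmul, coextDiff_tmul, extDiff_tmul, twistedDiff_tmul, hd, hparity,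
      coextTwist_extAction, TensorProduct.tmul_sub, tmul_map_mul]
    simp only [TensorProduct.add_tmul, TensorProduct.tmul_add, map_add, map_sub,
      TensorProduct.assoc_tmul]
    abel

end TwistedTensor

/-- An augmentation of a dg algebra: a morphism of dg algebras to `ℚ` in degree `0`. -/
structure Augmentation (A : DGAlgebra) where
  toFun : A.carrier →ₗ[ℚ] ℚ
  map_of_ne_zero : ∀ n ≠ 0, ∀ a ∈ A.grading n, toFun a = 0
  map_d : ∀ a, toFun (A.d a) = 0
  map_one : toFun A.one = 1
  map_mul : ∀ a b, toFun (A.mul a b) = toFun a * toFun b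

theorem Augmentation.map_parity {A : DGAlgebra} (E : Augmentation A) (a : A.carrier) :
    E.toFun (parityOf A.grading a) = E.toFun a :=
  apply_parityOf_of_concentrated E.map_of_ne_zero a

theorem Augmentation.zpow_mul_map {A : DGAlgebra} (E : Augmentation A) {i : ℤ} {a : A.carrier}
    (ha : a ∈ A.grading i) : (-1 : ℚ) ^ i * E.toFun a = E.toFun a := by
  simpa [parityOf_of_mem A.grading ha] using E.map_parity a

/-- `ℚ` as a dg algebra concentrated in degree `0`. -/
def ratAlgebra : DGAlgebra where
  carrier := ℚ
  grading := ratGrading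
  d := 0
  d_mem _ _ _ := Submodule.zero_mem _
  d_sq := rfl
  mul := LinearMap.mul ℚ ℚ
  one := (1 : ℚ)
  one_mem := mem_ratGrading.2 (.inl rfl)
  mul_mem i j x y hx hy := by
    obtain rfl | rfl := mem_ratGrading.1 hx <;> obtain rfl | rfl := mem_ratGrading.1 hy <;>
      simp [mem_ratGrading]
  mul_assoc' := mul_assoc
  one_mul' := one_mul
  mul_one' := mul_one
  leibniz := by simp

theorem CobarData.exists_augmentation {C : CoaugDGCoalgebra} (Ω : CobarData C) :
    ∃ E : Augmentation Ω.alg, ∀ c, E.toFun (Ω.t.toFun c) = 0 := by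
  obtain ⟨F, hF, -⟩ := Ω.univ ratAlgebra
    { toFun := 0
      mem := fun _ _ _ => Submodule.zero_mem _
      twist := by simp } rfl
  exact ⟨{ toFun := F.toLinearMap
           map_of_ne_zero := fun n hn a ha => (mem_ratGrading.1 (F.mem n a ha)).resolve_left hn
           map_d := LinearMap.congr_fun F.chain
           map_one := F.map_one
           map_mul := F.map_mul }, LinearMap.congr_fun hF⟩

/-- A Fox derivation of degree `k` with values in a right module: a derivation for the left action
through the augmentation. The Koszul sign `(-1)^(k|a|)` of the second term of `map_mul` is trivial
because the augmentation vanishes outside degree `0`. -/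
structure FoxDerivation {A : DGAlgebra} (E : Augmentation A) (M : RightDGModule A) (k : ℤ) where
  toFun : A.carrier →ₗ[ℚ] M.carrier
  mem : ∀ n, ∀ a ∈ A.grading n, toFun a ∈ M.grading (n + k)
  map_mul : ∀ a b, toFun (A.mul a b) = M.act (toFun a) b + E.toFun a • toFun b

section Cone

variable {A : DGAlgebra} {E : Augmentation A} {M : RightDGModule A} (ι : FoxDerivation E M 0)

/-- The multiplication `(a, m)(b, m') = (ab, mb + e(a)m')` on `A ⊕ M`. -/
def coneMul (E : Augmentation A) (M : RightDGModule A) :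
    A.carrier × M.carrier →ₗ[ℚ] A.carrier × M.carrier →ₗ[ℚ] A.carrier × M.carrier :=
  LinearMap.mk₂ ℚ (fun p q => (A.mul p.1 q.1, M.act p.2 q.1 + E.toFun p.1 • q.2))
    (fun _ _ _ => Prod.ext (by simp) <| by
      simp only [Prod.fst_add, Prod.snd_add, map_add, LinearMap.add_apply, add_smul]
      abel)
    (fun _ _ _ => Prod.ext (by simp) (by simp [smul_smul]))
    (fun _ _ _ => Prod.ext (by simp) <| by
      simp only [Prod.fst_add, Prod.snd_add, map_add, smul_add]
      abel)
    (fun _ _ _ => Prod.ext (by simp) (by simp [smul_smul, mul_comm]))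

/-- The square-zero extension of `A` by `M[-1]` whose differential is that of the mapping cone
of `ι`. Its algebra sections `a ↦ (a, φ a)` are the Fox derivations `φ` of degree `1` that
exhibit `ι` as null-homotopic. -/
abbrev coneAlgebra (hι : ∀ a, ι.toFun (A.d a) = M.d (ι.toFun a)) : DGAlgebra where
  carrier := A.carrier × M.carrier
  grading := coneGrading A.grading M.grading
  d := (A.d.comp (LinearMap.fst ℚ _ _)).prod
    (ι.toFun.comp (LinearMap.fst ℚ _ _) - M.d.comp (LinearMap.snd ℚ _ _))
  d_mem n p hp := by
    refine ⟨A.d_mem n p.1 hp.1, ?_⟩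
    have hιp : ι.toFun p.1 ∈ M.grading n := by simpa using ι.mem n p.1 hp.1
    have hdp : M.d p.2 ∈ M.grading n := by simpa using M.d_mem (n + 1) p.2 hp.2
    simpa using sub_mem hιp hdp
  d_sq := by
    ext p
    · simp [A.toDGVect.d_d]
    · simp [hι]
    · simp
    · simp [M.toDGVect.d_d]
  mul := coneMul E M
  one := (A.one, 0)
  one_mem := ⟨A.one_mem, Submodule.zero_mem _⟩
  mul_mem i j p q hp hq := by
    refine ⟨A.mul_mem i j _ _ hp.1 hq.1, add_mem ?_ ?_⟩
    · simpa only [add_right_comm] using M.act_mem _ _ _ _ hp.2 hq.1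
    · obtain rfl | hi := eq_or_ne i 0
      · simpa using Submodule.smul_mem _ _ hq.2
      · simp [E.map_of_ne_zero i hi _ hp.1]
  mul_assoc' p q r := by
    ext1
    · exact A.mul_assoc' p.1 q.1 r.1
    · simp [coneMul, M.act_mul, E.map_mul, smul_smul, add_assoc]
  one_mul' p := by ext1 <;> simp [coneMul, A.one_mul', E.map_one]
  mul_one' p := by ext1 <;> simp [coneMul, A.mul_one', M.act_one]
  leibniz i p q hp := by
    ext1
    · simp [coneMul, A.leibniz i _ _ hp.1]
    · simp only [coneMul, LinearMap.mk₂_apply, LinearMap.prod_apply, Function.prod_apply,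
        LinearMap.comp_apply, LinearMap.sub_apply, LinearMap.coe_fst, LinearMap.coe_snd,
        ι.map_mul, E.map_d, M.leibniz (i + 1) _ _ hp.2, E.zpow_mul_map hp.1,
        zpow_add_one₀ (show (-1 : ℚ) ≠ 0 by norm_num), map_add, map_smul, mul_neg, mul_one,
        neg_smul, zero_smul, add_zero, smul_add, smul_sub, smul_smul, map_sub, Prod.smul_mk,
        Prod.mk_add_mk]
      abel

/-- The projection of the cone of `ι` onto `A`. -/
def coneFst (hι : ∀ a, ι.toFun (A.d a) = M.d (ι.toFun a)) :
    DGAlgebraHom (coneAlgebra ι hι) A where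
  toLinearMap := LinearMap.fst ℚ _ _
  mem _ _ hp := hp.1
  chain := rfl
  map_one := rfl
  map_mul _ _ := rfl

end Cone

/-- The identity morphism of a dg algebra. -/
def DGAlgebraHom.id (A : DGAlgebra) : DGAlgebraHom A A where
  toLinearMap := LinearMap.id
  mem _ _ ha := ha
  chain := rfl
  map_one := rfl
  map_mul _ _ := rfl

/-- The composite of two morphisms of dg algebras. -/
def DGAlgebraHom.comp {A B B' : DGAlgebra} (G : DGAlgebraHom B B') (F : DGAlgebraHom A B) :
    DGAlgebraHom A B' where
  toLinearMap := G.toLinearMap.comp F.toLinearMap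
  mem n a ha := G.mem n _ (F.mem n a ha)
  chain := by
    rw [LinearMap.comp_assoc, F.chain, ← LinearMap.comp_assoc, G.chain, LinearMap.comp_assoc]
  map_one := by rw [LinearMap.comp_apply, F.map_one, G.map_one]
  map_mul a b := by simp only [LinearMap.comp_apply, F.map_mul, G.map_mul]

theorem CobarData.eq_id_of_comp_t {C : CoaugDGCoalgebra} (Ω : CobarData C)
    {F : DGAlgebraHom Ω.alg Ω.alg} (hF : F.toLinearMap.comp Ω.t.toFun = Ω.t.toFun) :
    F = DGAlgebraHom.id Ω.alg :=
  (Ω.univ Ω.alg Ω.t Ω.t_one).unique hF rfl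

section UniversalFoxDerivation

variable {C : CoaugDGCoalgebra} {Ω : CobarData C} {E : Augmentation Ω.alg}
  {M : RightDGModule Ω.alg}

theorem lift_coneMul (hE : ∀ c, E.toFun (Ω.t.toFun c) = 0) (s : C.carrier →ₗ[ℚ] M.carrier)
    (z : C.carrier ⊗[ℚ] C.carrier) :
    TensorProduct.lift (coneMul E M) (TensorProduct.map
        ((Ω.t.toFun.prod s).comp (parityOf C.grading)) (Ω.t.toFun.prod s) z)
      = (Ω.alg.mulMap
            (TensorProduct.map (Ω.t.toFun.comp (parityOf C.grading)) Ω.t.toFun z),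
          TensorProduct.lift M.act
            (TensorProduct.map (s.comp (parityOf C.grading)) Ω.t.toFun z)) := by
  induction z with
  | zero => simp only [map_zero, Prod.mk_zero_zero]
  | add z z' hz hz' => simp only [map_add, hz, hz', Prod.mk_add_mk]
  | tmul x y => simp [DGAlgebra.mulMap, coneMul, hE]

/-- The twisting chain `c ↦ (tc, sc)` with values in the cone of `ι`. -/
def coneTwistingChain {ι : FoxDerivation E M 0}
    (hι : ∀ a, ι.toFun (Ω.alg.d a) = M.d (ι.toFun a))
    (hE : ∀ c, E.toFun (Ω.t.toFun c) = 0) (s : C.carrier →ₗ[ℚ] M.carrier)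
    (hs_mem : ∀ n, ∀ c ∈ C.grading n, s c ∈ M.grading n)
    (hs_twist : ∀ c, ι.toFun (Ω.t.toFun c) + s (C.d c) + TensorProduct.lift M.act
      (TensorProduct.map (s.comp (parityOf C.grading)) Ω.t.toFun (C.comul c)) = M.d (s c)) :
    TwistingChain C.toDGCoalgebra (coneAlgebra ι hι) where
  toFun := Ω.t.toFun.prod s
  mem n c hc := ⟨Ω.t.mem n c hc, (sub_add_cancel n 1).symm ▸ hs_mem n c hc⟩
  twist := by
    ext1 c
    simp only [LinearMap.add_apply, LinearMap.comp_apply, DGAlgebra.mulMap, lift_coneMul hE]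
    ext1
    · exact LinearMap.congr_fun Ω.t.twist c
    · change ι.toFun (Ω.t.toFun c) - M.d (s c) + s (C.d c) + TensorProduct.lift M.act
        (TensorProduct.map (s.comp (parityOf C.grading)) Ω.t.toFun (C.comul c)) = 0
      rw [← hs_twist]
      abel

theorem CobarData.exists_foxDerivation_nullHomotopy (ι : FoxDerivation E M 0)
    (hι : ∀ a, ι.toFun (Ω.alg.d a) = M.d (ι.toFun a))
    (hE : ∀ c, E.toFun (Ω.t.toFun c) = 0) (s : C.carrier →ₗ[ℚ] M.carrier)
    (hs_mem : ∀ n, ∀ c ∈ C.grading n, s c ∈ M.grading n) (hs_one : s C.one = 0)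
    (hs_twist : ∀ c, ι.toFun (Ω.t.toFun c) + s (C.d c) + TensorProduct.lift M.act
      (TensorProduct.map (s.comp (parityOf C.grading)) Ω.t.toFun (C.comul c)) = M.d (s c)) :
    ∃ φ : FoxDerivation E M 1, (∀ c, φ.toFun (Ω.t.toFun c) = s c) ∧
      ∀ a, φ.toFun (Ω.alg.d a) + M.d (φ.toFun a) = ι.toFun a := by
  obtain ⟨F, hF, -⟩ := Ω.univ (coneAlgebra ι hι)
    (coneTwistingChain hι hE s hs_mem hs_twist) (Prod.ext Ω.t_one hs_one)
  have hF_t (c : C.carrier) : F.toLinearMap (Ω.t.toFun c) = (Ω.t.toFun c, s c) :=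
    LinearMap.congr_fun hF c
  have hid : (coneFst ι hι).comp F = DGAlgebraHom.id Ω.alg :=
    Ω.eq_id_of_comp_t (LinearMap.ext fun c => congrArg Prod.fst (hF_t c))
  have hfst (a : Ω.alg.carrier) : (F.toLinearMap a).1 = a :=
    LinearMap.congr_fun (congrArg DGAlgebraHom.toLinearMap hid) a
  refine ⟨{ toFun := (LinearMap.snd ℚ _ _).comp F.toLinearMap
            mem := fun n a ha => (F.mem n a ha).2
            map_mul := fun a b => ?_ }, fun c => congrArg Prod.snd (hF_t c), fun a => ?_⟩
  · have hmul := congrArg Prod.snd (F.map_mul a b)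
    simpa [coneAlgebra, coneMul, hfst] using hmul
  · have hchain := congrArg Prod.snd (LinearMap.congr_fun F.chain a)
    simpa [coneAlgebra, hfst, eq_sub_iff_add_eq] using hchain

end UniversalFoxDerivation

section CoaugmentationHomotopy

variable {C : CoaugDGCoalgebra}

/-- The Fox derivation `a ↦ 1 ⊗ a - e(a) 1 ⊗ 1` of degree `0` with values in `C ⊗^τ A`. -/
def coaugFoxDerivation {A : DGAlgebra} (τ : TwistingChain C.toDGCoalgebra A)
    (E : Augmentation A) : FoxDerivation E τ.coextModule 0 where
  toFun := TensorProduct.mk ℚ _ _ C.one - E.toFun.smulRight (C.one ⊗ₜ A.one)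
  mem n a ha := by
    refine sub_mem (tmul_mem_tensorGrading C.one_mem ha (by lia)) ?_
    obtain rfl | hn := eq_or_ne n 0
    · exact Submodule.smul_mem _ _ (tmul_mem_tensorGrading C.one_mem A.one_mem rfl)
    · simp [E.map_of_ne_zero n hn a ha]
  map_mul a b := by
    simp [coextRightAct_tmul, A.one_mul', E.map_mul, smul_sub, smul_smul]

theorem coextDiff_one_tmul {A : DGAlgebra} {τ : TwistingChain C.toDGCoalgebra A}
    (hτ : τ.toFun C.one = 0) (a : A.carrier) :
    coextDiff C.toDGCoalgebra A τ A.carrier A.d A.mulMap (C.one ⊗ₜ a) = C.one ⊗ₜ A.d a := by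
  simp [coextDiff_tmul, C.comul_one, coextTwist_tmul, hτ, C.d_one, C.parity_one]

/-- The map `c ↦ (c - ε(c)1) ⊗ 1`, which prescribes the values on the generators `tc` of a Fox
derivation contracting `C ⊗^t ΩC`. -/
def reducedTmulOne (C : CoaugDGCoalgebra) (A : DGAlgebra) :
    C.carrier →ₗ[ℚ] C.carrier ⊗[ℚ] A.carrier :=
  ((TensorProduct.mk ℚ C.carrier A.carrier).flip A.one).comp
    (LinearMap.id - C.counit.smulRight C.one)

theorem reducedTmulOne_apply (A : DGAlgebra) (c : C.carrier) :
    reducedTmulOne C A c = c ⊗ₜ A.one - C.counit c • (C.one ⊗ₜ[ℚ] A.one) := by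
  simp [reducedTmulOne, TensorProduct.smul_tmul']

theorem lift_coextRightAct_reducedTmulOne {A : DGAlgebra} (τ : TwistingChain C.toDGCoalgebra A)
    (z : C.carrier ⊗[ℚ] C.carrier) :
    TensorProduct.lift (coextRightAct C.toDGCoalgebra A) (TensorProduct.map
        ((reducedTmulOne C A).comp (parityOf C.grading)) τ.toFun z)
      = coextTwist τ A.mulMap A.one z - C.one ⊗ₜ τ.toFun (C.counitMap C.carrier z) := by
  induction z with
  | zero => simp
  | add z z' hz hz' =>
    simp only [map_add, hz, hz', TensorProduct.tmul_add]
    abel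
  | tmul x y =>
    simp [reducedTmulOne_apply, coextTwist_tmul, coextRightAct_tmul, A.one_mul', A.mul_one',
      DGAlgebra.mulMap, C.counitMap_tmul, C.counit_parity]

theorem CobarData.exists_foxDerivation (Ω : CobarData C) {E : Augmentation Ω.alg}
    (hE : ∀ c, E.toFun (Ω.t.toFun c) = 0) :
    ∃ φ : FoxDerivation E Ω.t.coextModule 1,
      (∀ c, φ.toFun (Ω.t.toFun c) = reducedTmulOne C Ω.alg c) ∧
      ∀ a, φ.toFun (Ω.alg.d a) + Ω.t.coextModule.d (φ.toFun a)
        = (coaugFoxDerivation Ω.t E).toFun a := by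
  refine Ω.exists_foxDerivation_nullHomotopy (coaugFoxDerivation Ω.t E) (fun a => ?_) hE
    (reducedTmulOne C Ω.alg) (fun n c hc => ?_) ?_ fun c => ?_
  · simp [coaugFoxDerivation, coextDiff_one_tmul Ω.t_one, E.map_d, Ω.alg.d_one]
  · refine tmul_mem_tensorGrading (sub_mem hc ?_) Ω.alg.one_mem (add_zero n)
    obtain rfl | hn := eq_or_ne n 0
    · exact Submodule.smul_mem _ _ C.one_mem
    · simp [C.counit_zero n hn c hc]
  · simp [reducedTmulOne_apply, C.counit_one]
  · rw [lift_coextRightAct_reducedTmulOne]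
    simp only [coaugFoxDerivation, LinearMap.sub_apply, TensorProduct.mk_apply,
      LinearMap.coe_smulRight, hE, reducedTmulOne_apply, coextDiff_tmul,
      coextDiff_one_tmul Ω.t_one, Ω.alg.d_one, C.counit_d, C.counitMap_comul, map_sub, map_smul,
      TensorProduct.tmul_zero, zero_smul, smul_zero, add_zero, sub_zero]
    abel

end CoaugmentationHomotopy

theorem twistedDiff_foxDerivation {C : DGCoalgebra} {A : DGAlgebra} {E : Augmentation A}
    (τ : TwistingChain C A) {M : RightDGModule A} (N : DGComodule C) {φ : FoxDerivation E M 1}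
    {ι : A.carrier →ₗ[ℚ] M.carrier} (hφ : ∀ a, φ.toFun (A.d a) + M.d (φ.toFun a) = ι a)
    (a : A.carrier) (n : N.carrier) :
    TensorProduct.map φ.toFun LinearMap.id (extDiff C A τ N.carrier N.d N.coact (a ⊗ₜ n))
        + twistedDiff τ M N (φ.toFun a ⊗ₜ n)
      = ι a ⊗ₜ n
        - E.toFun a • TensorProduct.map (φ.toFun.comp τ.toFun) LinearMap.id (N.coact n) := by
  have hparity : φ.toFun (parityOf A.grading a) = -parityOf M.grading (φ.toFun a) := by
    simp [parityOf_apply_of_degree M.grading 1 φ.mem]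
  have hmul : φ.toFun.comp ((A.mul (parityOf A.grading a)).comp τ.toFun)
      = E.toFun a • φ.toFun.comp τ.toFun
        - (M.act (parityOf M.grading (φ.toFun a))).comp τ.toFun := by
    ext c
    simp [φ.map_mul, hparity, E.map_parity, neg_add_eq_sub]
  have hmap (w : C.carrier ⊗[ℚ] N.carrier) :
      TensorProduct.map φ.toFun LinearMap.id
          (TensorProduct.map ((A.mul (parityOf A.grading a)).comp τ.toFun) LinearMap.id w)
        = E.toFun a • TensorProduct.map (φ.toFun.comp τ.toFun) LinearMap.id w
          - TensorProduct.map ((M.act (parityOf M.grading (φ.toFun a))).comp τ.toFun)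
              LinearMap.id w := by
    simp only [← LinearMap.rTensor_def, ← LinearMap.rTensor_comp_apply, hmul,
      LinearMap.rTensor_sub, LinearMap.rTensor_smul, LinearMap.sub_apply, LinearMap.smul_apply]
  simp only [extDiff_tmul, twistedDiff_tmul, map_add, map_sub, TensorProduct.map_tmul, hmap,
    hparity, ← hφ, LinearMap.id_apply, TensorProduct.add_tmul, TensorProduct.neg_tmul]
  abel

section AugmentationMap

variable {A : DGAlgebra} (E : Augmentation A)

/-- The map `a ⊗ v ↦ e(a)v` induced by an augmentation `e`. -/
def Augmentation.tensorMap (V : Type) [AddCommGroup V] [Module ℚ V] :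
    A.carrier ⊗[ℚ] V →ₗ[ℚ] V :=
  (TensorProduct.lid ℚ V).toLinearMap.comp (TensorProduct.map E.toFun LinearMap.id)

variable {V : Type} [AddCommGroup V] [Module ℚ V]

theorem Augmentation.tensorMap_tmul (a : A.carrier) (v : V) :
    E.tensorMap V (a ⊗ₜ v) = E.toFun a • v := by
  simp [tensorMap]

theorem Augmentation.tensorMap_extAction (a : A.carrier) (x : A.carrier ⊗[ℚ] V) :
    E.tensorMap V (extAction A V (a ⊗ₜ x)) = E.toFun a • E.tensorMap V x := by
  induction x with
  | zero => simp
  | add x y hx hy => simp only [TensorProduct.tmul_add, map_add, hx, hy, smul_add]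
  | tmul b v => simp [extAction_tmul, E.tensorMap_tmul, E.map_mul, smul_smul]

variable {E} {C : DGCoalgebra} {τ : TwistingChain C A} (N : DGComodule C)

theorem Augmentation.tensorMap_extDiff (hE : ∀ c, E.toFun (τ.toFun c) = 0)
    (x : A.carrier ⊗[ℚ] N.carrier) :
    E.tensorMap N.carrier (extDiff C A τ N.carrier N.d N.coact x)
      = N.d (E.tensorMap N.carrier x) := by
  induction x with
  | zero => simp
  | add x y hx hy => simp only [map_add, hx, hy]
  | tmul a n =>
    have hcoact (w : C.carrier ⊗[ℚ] N.carrier) : E.tensorMap N.carrier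
        (TensorProduct.map ((A.mul (parityOf A.grading a)).comp τ.toFun) LinearMap.id w) = 0 := by
      induction w with
      | zero => simp
      | tmul c n => simp [E.tensorMap_tmul, E.map_mul, hE]
      | add w w' hw hw' => simp only [map_add, hw, hw', add_zero]
    simp [extDiff_tmul, E.tensorMap_tmul, E.map_d, E.map_parity, hcoact]

end AugmentationMap

theorem isQuasiIso_of_deformationRetract {V W : Type} [AddCommGroup V] [Module ℚ V]
    [AddCommGroup W] [Module ℚ W] {dV : V →ₗ[ℚ] V} {dW : W →ₗ[ℚ] W} {i : V →ₗ[ℚ] W}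
    {r : W →ₗ[ℚ] V} {h : W →ₗ[ℚ] W} (hr : ∀ w, r (dW w) = dV (r w)) (hri : ∀ v, r (i v) = v)
    (hh : ∀ w, h (dW w) + dW (h w) = w - i (r w)) : IsQuasiIso dV dW i := by
  refine ⟨fun v _ ⟨w, hw⟩ => ⟨r w, ?_⟩, fun w hw => ⟨r w, ?_, h w, ?_⟩⟩
  · rw [← hr, ← hw, hri]
  · rw [← hr, hw, map_zero]
  · rw [← hh, hw, map_zero, zero_add]

section Unit

variable {C : CoaugDGCoalgebra} (Ω : CobarData C) (N : DGComodule C.toDGCoalgebra)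

/-- The differential of `C ⊗^t (ΩC ⊗_t N)`. -/
abbrev unitDiff : C.carrier ⊗[ℚ] (Ω.alg.carrier ⊗[ℚ] N.carrier) →ₗ[ℚ]
    C.carrier ⊗[ℚ] (Ω.alg.carrier ⊗[ℚ] N.carrier) :=
  coextDiff C.toDGCoalgebra Ω.alg Ω.t (Ω.alg.carrier ⊗[ℚ] N.carrier)
    (extDiff C.toDGCoalgebra Ω.alg Ω.t N.carrier N.d N.coact) (extAction Ω.alg N.carrier)

/-- The retraction `c ⊗ a ⊗ n ↦ ε(c)e(a)n` of the unit. -/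
def unitRetraction (E : Augmentation Ω.alg) :
    C.carrier ⊗[ℚ] (Ω.alg.carrier ⊗[ℚ] N.carrier) →ₗ[ℚ] N.carrier :=
  (E.tensorMap N.carrier).comp (C.counitMap _)

theorem unitRetraction_unitDiff {E : Augmentation Ω.alg}
    (hE : ∀ c, E.toFun (Ω.t.toFun c) = 0)
    (z : C.carrier ⊗[ℚ] (Ω.alg.carrier ⊗[ℚ] N.carrier)) :
    unitRetraction Ω N E (unitDiff Ω N z) = N.d (unitRetraction Ω N E z) := by
  induction z with
  | zero => simp
  | add z z' hz hz' => simp only [map_add, hz, hz']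
  | tmul c x =>
    simp [unitRetraction, counitMap_coextDiff, C.counitMap_tmul,
      Augmentation.tensorMap_extDiff N hE, E.tensorMap_extAction, hE]

theorem unitRetraction_cobarUnit (E : Augmentation Ω.alg) (n : N.carrier) :
    unitRetraction Ω N E (cobarUnit C Ω N n) = n := by
  suffices ∀ w, unitRetraction Ω N E (TensorProduct.map LinearMap.id
      (TensorProduct.mk ℚ Ω.alg.carrier N.carrier Ω.alg.one) w) = C.counitMap N.carrier w from
    (this _).trans (N.counitMap_coact n)
  intro w
  induction w with
  | zero => simp
  | tmul c n => simp [unitRetraction, C.counitMap_tmul, E.tensorMap_tmul, E.map_one]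
  | add w w' hw hw' => simp only [map_add, hw, hw']

variable {Ω} {E : Augmentation Ω.alg} (φ : FoxDerivation E Ω.t.coextModule 1)

/-- The homotopy `c ⊗ a ⊗ n ↦ ε(c) φ(a) ⊗ n`. -/
def unitHomotopy : C.carrier ⊗[ℚ] (Ω.alg.carrier ⊗[ℚ] N.carrier) →ₗ[ℚ]
    C.carrier ⊗[ℚ] (Ω.alg.carrier ⊗[ℚ] N.carrier) :=
  (TensorProduct.assoc ℚ _ _ _).toLinearMap.comp
    ((TensorProduct.map φ.toFun LinearMap.id).comp (C.counitMap _))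

variable {φ}

theorem assoc_map_foxDerivation_t
    (hφ_t : ∀ c, φ.toFun (Ω.t.toFun c) = reducedTmulOne C Ω.alg c) (n : N.carrier) :
    TensorProduct.assoc ℚ _ _ _
        (TensorProduct.map (φ.toFun.comp Ω.t.toFun) LinearMap.id (N.coact n))
      = cobarUnit C Ω N n - C.one ⊗ₜ (Ω.alg.one ⊗ₜ n) := by
  suffices ∀ w, TensorProduct.assoc ℚ _ _ _
        (TensorProduct.map (φ.toFun.comp Ω.t.toFun) LinearMap.id w)
      = TensorProduct.map LinearMap.id
          (TensorProduct.mk ℚ Ω.alg.carrier N.carrier Ω.alg.one) w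
        - C.one ⊗ₜ (Ω.alg.one ⊗ₜ C.counitMap N.carrier w) by
    rw [this, N.counitMap_coact]
    rfl
  intro w
  induction w with
  | zero => simp
  | tmul c n =>
    simp [hφ_t, reducedTmulOne_apply, C.counitMap_tmul, TensorProduct.sub_tmul,
      ← TensorProduct.smul_tmul']
  | add w w' hw hw' =>
    simp only [map_add, hw, hw', TensorProduct.tmul_add]
    abel

theorem assoc_map_foxDerivation_extAction (hE : ∀ c, E.toFun (Ω.t.toFun c) = 0)
    (hφ_t : ∀ c, φ.toFun (Ω.t.toFun c) = reducedTmulOne C Ω.alg c) (c : C.carrier)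
    {V : Type} [AddCommGroup V] [Module ℚ V] (a : Ω.alg.carrier) (v : V) :
    TensorProduct.assoc ℚ _ _ _ (TensorProduct.map φ.toFun LinearMap.id
        (extAction Ω.alg V (Ω.t.toFun c ⊗ₜ (a ⊗ₜ v))))
      = c ⊗ₜ (a ⊗ₜ v) - C.counit c • (C.one ⊗ₜ (a ⊗ₜ v)) := by
  simp [extAction_tmul, φ.map_mul, hE, hφ_t, reducedTmulOne_apply, coextRightAct_tmul,
    Ω.alg.one_mul', TensorProduct.sub_tmul, ← TensorProduct.smul_tmul']

theorem assoc_map_foxDerivation_extDiff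
    (hφ_t : ∀ c, φ.toFun (Ω.t.toFun c) = reducedTmulOne C Ω.alg c)
    (hφ : ∀ a, φ.toFun (Ω.alg.d a) + Ω.t.coextModule.d (φ.toFun a)
      = (coaugFoxDerivation Ω.t E).toFun a) (a : Ω.alg.carrier) (n : N.carrier) :
    TensorProduct.assoc ℚ _ _ _ (TensorProduct.map φ.toFun LinearMap.id
        (extDiff C.toDGCoalgebra Ω.alg Ω.t N.carrier N.d N.coact (a ⊗ₜ n)))
      = C.one ⊗ₜ (a ⊗ₜ n) - E.toFun a • cobarUnit C Ω N n
        - unitDiff Ω N (TensorProduct.assoc ℚ _ _ _ (φ.toFun a ⊗ₜ n)) := by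
  rw [coextDiff_assoc, eq_sub_iff_add_eq, ← map_add, twistedDiff_foxDerivation Ω.t N hφ, map_sub,
    map_smul, assoc_map_foxDerivation_t N hφ_t]
  simp [coaugFoxDerivation, TensorProduct.sub_tmul, ← TensorProduct.smul_tmul', smul_sub]

theorem unitHomotopy_unitDiff (hE : ∀ c, E.toFun (Ω.t.toFun c) = 0)
    (hφ_t : ∀ c, φ.toFun (Ω.t.toFun c) = reducedTmulOne C Ω.alg c)
    (hφ : ∀ a, φ.toFun (Ω.alg.d a) + Ω.t.coextModule.d (φ.toFun a)
      = (coaugFoxDerivation Ω.t E).toFun a)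
    (z : C.carrier ⊗[ℚ] (Ω.alg.carrier ⊗[ℚ] N.carrier)) :
    unitHomotopy N φ (unitDiff Ω N z) + unitDiff Ω N (unitHomotopy N φ z)
      = z - cobarUnit C Ω N (unitRetraction Ω N E z) := by
  suffices (unitHomotopy N φ).comp (unitDiff Ω N) + (unitDiff Ω N).comp (unitHomotopy N φ)
      = LinearMap.id - (cobarUnit C Ω N).comp (unitRetraction Ω N E) from
    LinearMap.congr_fun this z
  ext c a n
  have hhd : unitHomotopy N φ (unitDiff Ω N (c ⊗ₜ (a ⊗ₜ n)))
      = C.counit c • (C.one ⊗ₜ (a ⊗ₜ n) - E.toFun a • cobarUnit C Ω N n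
          - unitDiff Ω N (TensorProduct.assoc ℚ _ _ _ (φ.toFun a ⊗ₜ n)))
        + (c ⊗ₜ (a ⊗ₜ n) - C.counit c • (C.one ⊗ₜ (a ⊗ₜ n))) := by
    rw [← assoc_map_foxDerivation_extDiff N hφ_t hφ,
      ← assoc_map_foxDerivation_extAction hE hφ_t]
    simp [unitHomotopy, counitMap_coextDiff]
  have hdh : unitDiff Ω N (unitHomotopy N φ (c ⊗ₜ (a ⊗ₜ n)))
      = C.counit c • unitDiff Ω N (TensorProduct.assoc ℚ _ _ _ (φ.toFun a ⊗ₜ n)) := by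
    simp [unitHomotopy, C.counitMap_tmul]
  have hr : unitRetraction Ω N E (c ⊗ₜ (a ⊗ₜ n)) = C.counit c • E.toFun a • n := by
    simp [unitRetraction, C.counitMap_tmul, E.tensorMap_tmul]
  change unitHomotopy N φ (unitDiff Ω N (c ⊗ₜ (a ⊗ₜ n)))
    + unitDiff Ω N (unitHomotopy N φ (c ⊗ₜ (a ⊗ₜ n)))
    = c ⊗ₜ (a ⊗ₜ n) - cobarUnit C Ω N (unitRetraction Ω N E (c ⊗ₜ (a ⊗ₜ n)))
  rw [hhd, hdh, hr, map_smul, map_smul]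
  module

end Unit

theorem coextCoact_map {C : DGCoalgebra} {V W : Type} [AddCommGroup V] [Module ℚ V]
    [AddCommGroup W] [Module ℚ W] (f : V →ₗ[ℚ] W) :
    (coextCoact C W).comp (TensorProduct.map LinearMap.id f)
      = (TensorProduct.map LinearMap.id (TensorProduct.map LinearMap.id f)).comp
          (coextCoact C V) := by
  ext c v
  suffices ∀ u, TensorProduct.assoc ℚ _ _ _ (u ⊗ₜ f v)
      = TensorProduct.map LinearMap.id (TensorProduct.map LinearMap.id f)
          (TensorProduct.assoc ℚ _ _ _ (u ⊗ₜ v)) from this (C.comul c)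
  intro u
  induction u with
  | zero => simp only [TensorProduct.zero_tmul, map_zero]
  | tmul c c' => rfl
  | add u u' hu hu' => simp only [TensorProduct.add_tmul, map_add, hu, hu']

section UnitTheorem

variable {C : CoaugDGCoalgebra} (Ω : CobarData C) (N : DGComodule C.toDGCoalgebra)

theorem coextCoact_comp_cobarUnit :
    (coextCoact C.toDGCoalgebra (Ω.alg.carrier ⊗[ℚ] N.carrier)).comp (cobarUnit C Ω N)
      = (TensorProduct.map LinearMap.id (cobarUnit C Ω N)).comp N.coact := by
  have hcoassoc : (coextCoact C.toDGCoalgebra N.carrier).comp N.coact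
      = (TensorProduct.map LinearMap.id N.coact).comp N.coact := N.coassoc
  unfold cobarUnit
  rw [← LinearMap.comp_assoc, coextCoact_map, LinearMap.comp_assoc, hcoassoc,
    ← LinearMap.comp_assoc, ← TensorProduct.map_comp, LinearMap.id_comp]

theorem isQuasiIso_cobarUnit : IsQuasiIso N.d (unitDiff Ω N) (cobarUnit C Ω N) := by
  obtain ⟨E, hE⟩ := Ω.exists_augmentation
  obtain ⟨φ, hφ_t, hφ⟩ := Ω.exists_foxDerivation hE
  exact isQuasiIso_of_deformationRetract (unitRetraction_unitDiff Ω N hE)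
    (unitRetraction_cobarUnit Ω N E) (unitHomotopy_unitDiff N hE hφ_t hφ)

theorem map_comp_cobarUnit {N N' : DGComodule C.toDGCoalgebra}
    {f : N.carrier →ₗ[ℚ] N'.carrier}
    (hf : (TensorProduct.map LinearMap.id f).comp N.coact = N'.coact.comp f) :
    (TensorProduct.map LinearMap.id (TensorProduct.map LinearMap.id f)).comp (cobarUnit C Ω N)
      = (cobarUnit C Ω N').comp f := by
  unfold cobarUnit
  rw [LinearMap.comp_assoc, ← hf, ← LinearMap.comp_assoc, ← LinearMap.comp_assoc,
    ← TensorProduct.map_comp, ← TensorProduct.map_comp]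
  rfl

theorem cobar_unit_is_quasiIso_general :
    (coextCoact C.toDGCoalgebra (Ω.alg.carrier ⊗[ℚ] N.carrier)).comp (cobarUnit C Ω N)
      = (TensorProduct.map LinearMap.id (cobarUnit C Ω N)).comp N.coact ∧
    IsQuasiIso N.d (unitDiff Ω N) (cobarUnit C Ω N) ∧
    (∀ (N' : DGComodule C.toDGCoalgebra) (f : N.carrier →ₗ[ℚ] N'.carrier),
      IsComoduleHom C.toDGCoalgebra N N' f →
      (TensorProduct.map LinearMap.id (TensorProduct.map LinearMap.id f)).comp
          (cobarUnit C Ω N)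
        = (cobarUnit C Ω N').comp f) :=
  ⟨coextCoact_comp_cobarUnit Ω N, isQuasiIso_cobarUnit Ω N,
    fun _ _ hf => map_comp_cobarUnit Ω hf.2.2⟩

end UnitTheorem

/-- For a 2-reduced cocommutative dg coalgebra `C` with universal
twisting chain `t : C ⇝ ΩC` and any left dg `C`-comodule `N`, the unit
`N → t_* t^! N = C ⊗^t (ΩC ⊗_t N)`, `n ↦ n₍₀₎ ⊗ 1 ⊗ n₍₁₎` is a quasi-isomorphism
of `C`-comodules, natural in `N`. -/
theorem cobar_unit_is_quasiIso (C : CoaugDGCoalgebra) (hred : C.TwoReduced)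
    (hcc : C.toDGCoalgebra.Cocomm) (Ω : CobarData C) (N : DGComodule C.toDGCoalgebra) :
    -- the unit is colinear:
    (coextCoact C.toDGCoalgebra (Ω.alg.carrier ⊗[ℚ] N.carrier)).comp (cobarUnit C Ω N)
      = (TensorProduct.map LinearMap.id (cobarUnit C Ω N)).comp N.coact ∧
    -- it is a quasi-isomorphism:
    IsQuasiIso N.d
      (coextDiff C.toDGCoalgebra Ω.alg Ω.t (Ω.alg.carrier ⊗[ℚ] N.carrier)
        (extDiff C.toDGCoalgebra Ω.alg Ω.t N.carrier N.d N.coact)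
        (extAction Ω.alg N.carrier))
      (cobarUnit C Ω N) ∧
    -- and it is natural in `N`:
    (∀ (N' : DGComodule C.toDGCoalgebra) (f : N.carrier →ₗ[ℚ] N'.carrier),
      IsComoduleHom C.toDGCoalgebra N N' f →
      (TensorProduct.map LinearMap.id (TensorProduct.map LinearMap.id f)).comp
          (cobarUnit C Ω N)
        = (cobarUnit C Ω N').comp f) :=
  cobar_unit_is_quasiIso_general Ω N

end
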